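/- For every integer ℓ ≥ 32, the fraction of matrices K ∈ GL(ℓ,F₂) with the following property is at least 1 − 1/ℓ: for every i ∈ {1,…,ℓ}, f_{K,i}(z) > 1 − ℓ^{−(2 + log₂ℓ)} for all z ∈ [0,1] with z ≥ i/ℓ + 5·ℓ^{−1/2}·log₂ℓ, and f_{K,i}(z) < ℓ^{−(2 + log₂ℓ)} for all z ∈ [0,1] with z ≤ i/ℓ − 5·ℓ^{−1/2}·log₂ℓ. -/

import Mathlib

/-!
For a fixed index `i` (1-indexed as `m = i + 1`) and a fixed erasure set `S`, a uniform
`K ∈ GL(ℓ, F₂)` sends each fixed nonzero vector to a uniform nonzero vector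
(`card_mulVec_eq_mul`). Bit `i` fails to be decodable iff some `v ∈ e_i + span {e_j | j > i}` has
`v K` supported on `S`; it is decodable iff some `w` supported off `S` has
`K w ∈ e_i + span {e_j | j < i}`. Union bounds give
`P_K(not decodable) ≤ 2 · 2 ^ (|S| - m)` and `P_K(decodable) ≤ 2 ^ (m - |S|)`; both are at most
twice the tilted bound `exp (∓ μ (m - |S|))` for every `0 ≤ μ ≤ log 2`.

Charge each erasure set the inverse of this tilted bound, average over the sets of each size, and
sum over `i` and all sizes. The resulting `tiltMass` has mean at most `3 ℓ (ℓ + 1)`, so by Markov's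
inequality it is at most `3 ℓ² (ℓ + 1)` for a fraction at least `1 - 1 / ℓ` of all `K`
(`fracGL_ge_of_tiltMass`). For such `K`, every `i` and every `z` simultaneously, a Chernoff
estimate of the binomial weights (`pattern_prob_le`) bounds `f_{K,i}(z)` and `1 - f_{K,i}(z)` by
`3 ℓ² (ℓ + 1) exp (± μ (ℓ z - m) + ℓ μ²)`. With `L = log₂ ℓ` and `μ = 5 L / (2 √ℓ)` the exponent is
at most `-25 L² / 4` outside the window `|z - m / ℓ| < 5 L / √ℓ`, which is far below
`log (ℓ ^ (-(2 + L)))`, even after paying `3 ℓ² (ℓ + 1) ≤ ℓ ^ 4`. If `μ > 1 / 2` the window covers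
all of `[0, 1]` and nothing is to be proved.
-/

open scoped Classical

noncomputable section

/-- Bit `i` (0-indexed; it represents the 1-indexed bit `i+1`) is decodable under the
kernel `K` and the erasure set `S`. -/
def Decodable (ℓ : ℕ) (K : Matrix (Fin ℓ) (Fin ℓ) (ZMod 2)) (i : Fin ℓ)
    (S : Finset (Fin ℓ)) : Prop :=
  ∀ u u' : Fin ℓ → ZMod 2,
    (∀ j : Fin ℓ, j < i → u j = u' j) →
    (∀ j : Fin ℓ, j ∉ S → Matrix.vecMul u K j = Matrix.vecMul u' K j) →
    u i = u' i

/-- The polarization behavior `f_{K,i}(z)` of the kernel `K`. -/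
def fK (ℓ : ℕ) (K : Matrix (Fin ℓ) (Fin ℓ) (ZMod 2)) (i : Fin ℓ) (z : ℝ) : ℝ :=
  ∑ S : Finset (Fin ℓ),
    if ¬ Decodable ℓ K i S then z ^ S.card * (1 - z) ^ (ℓ - S.card) else 0

/-- The polarization process `Z_m(z, b)`. -/
def Zproc (ℓ : ℕ) (K : Matrix (Fin ℓ) (Fin ℓ) (ZMod 2)) (z : ℝ) :
    (m : ℕ) → (Fin m → Fin ℓ) → ℝ
  | 0, _ => z
  | m + 1, b => fK ℓ K (b (Fin.last m)) (Zproc ℓ K z m (fun j => b j.castSucc))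

/-- `g_α(z) = z^α (1-z)^α`. -/
def gfun (α z : ℝ) : ℝ := z ^ α * (1 - z) ^ α

/-- `λ_{α,K}(z)`. -/
def lam (ℓ : ℕ) (K : Matrix (Fin ℓ) (Fin ℓ) (ZMod 2)) (α z : ℝ) : ℝ :=
  ((1 / (ℓ : ℝ)) * ∑ i : Fin ℓ, gfun α (fK ℓ K i z)) / gfun α z

/-- `λ*_{α,K} = sup_{z ∈ (0,1)} λ_{α,K}(z)`. -/
def lamStar (ℓ : ℕ) (K : Matrix (Fin ℓ) (Fin ℓ) (ZMod 2)) (α : ℝ) : ℝ :=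
  sSup (lam ℓ K α '' Set.Ioo 0 1)

/-- `E_z[h(Z_m)]`, the uniform average over branch sequences `b`. -/
def expZ (ℓ : ℕ) (K : Matrix (Fin ℓ) (Fin ℓ) (ZMod 2)) (z : ℝ) (m : ℕ) (h : ℝ → ℝ) : ℝ :=
  (∑ b : Fin m → Fin ℓ, h (Zproc ℓ K z m b)) / (ℓ : ℝ) ^ m


/-- The fraction of matrices `K ∈ GL(ℓ, F₂)` satisfying the property `P`. -/
def fracGL (ℓ : ℕ) (P : Matrix.GeneralLinearGroup (Fin ℓ) (ZMod 2) → Prop) : ℝ :=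
  ((Finset.univ.filter P).card : ℝ) /
    (Fintype.card (Matrix.GeneralLinearGroup (Fin ℓ) (ZMod 2)) : ℝ)


/-! ### Uniformity of `K v` over `GL(ℓ, F₂)` -/

/-- `GL(ℓ, F₂)`. -/
abbrev GLF (ℓ : ℕ) := Matrix.GeneralLinearGroup (Fin ℓ) (ZMod 2)

/-- `GL(ℓ, F₂)` is transitive on nonzero vectors. -/
lemma exists_GL_mulVec_eq {ℓ : ℕ} {y y' : Fin ℓ → ZMod 2} (hy : y ≠ 0) (hy' : y' ≠ 0) :
    ∃ g : GLF ℓ, (g : Matrix (Fin ℓ) (Fin ℓ) (ZMod 2)).mulVec y = y' := by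
  let a := LinearEquiv.toSpanNonzeroSingleton (ZMod 2) _ y hy
  let b := LinearEquiv.toSpanNonzeroSingleton (ZMod 2) _ y' hy'
  obtain ⟨e, he⟩ := Submodule.exists_linearEquiv_restrict_eq (a.symm.trans b)
  refine ⟨Matrix.GeneralLinearGroup.toLin.symm
    (LinearMap.GeneralLinearGroup.ofLinearEquiv e), ?_⟩
  have h1 : e y = y' := by
    have h2 := he (a 1)
    rw [LinearEquiv.trans_apply, LinearEquiv.symm_apply_apply] at h2
    simpa [a, b] using h2.symm
  have h3 := Matrix.GeneralLinearGroup.toLin_apply (Matrix.GeneralLinearGroup.toLin.symm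
    (LinearMap.GeneralLinearGroup.ofLinearEquiv e)) y
  rw [MulEquiv.apply_symm_apply] at h3
  rw [← h1]
  exact h3.symm

/-- For a fixed nonzero `v`, the vector `K v` is uniform on the `2 ^ ℓ - 1` nonzero vectors. -/
lemma card_mulVec_eq_mul {ℓ : ℕ} {v y : Fin ℓ → ZMod 2} (hv : v ≠ 0) (hy : y ≠ 0) :
    (Finset.univ.filter fun K : GLF ℓ =>
      (K : Matrix (Fin ℓ) (Fin ℓ) (ZMod 2)).mulVec v = y).card * (2 ^ ℓ - 1)
      = Fintype.card (GLF ℓ) := by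
  have hfib : ∀ y' : Fin ℓ → ZMod 2, y' ≠ 0 →
      (Finset.univ.filter fun K : GLF ℓ =>
        (K : Matrix (Fin ℓ) (Fin ℓ) (ZMod 2)).mulVec v = y').card =
      (Finset.univ.filter fun K : GLF ℓ =>
        (K : Matrix (Fin ℓ) (Fin ℓ) (ZMod 2)).mulVec v = y).card := by
    have key : ∀ y₁ y₂ : Fin ℓ → ZMod 2, y₁ ≠ 0 → y₂ ≠ 0 →
      (Finset.univ.filter fun K : GLF ℓ =>
        (K : Matrix (Fin ℓ) (Fin ℓ) (ZMod 2)).mulVec v = y₁).card ≤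
      (Finset.univ.filter fun K : GLF ℓ =>
        (K : Matrix (Fin ℓ) (Fin ℓ) (ZMod 2)).mulVec v = y₂).card := by
      intro y₁ y₂ h₁ h₂
      obtain ⟨g, hg⟩ := exists_GL_mulVec_eq h₁ h₂
      refine Finset.card_le_card_of_injOn (fun K => g * K) ?_ (fun a _ b _ h => mul_left_cancel h)
      intro K hK
      simp only [Finset.coe_filter, Finset.mem_univ, true_and, Set.mem_ofPred_eq] at hK ⊢
      rw [Units.val_mul, ← Matrix.mulVec_mulVec, hK, hg]
    exact fun y' h => le_antisymm (key _ _ h hy) (key _ _ hy h)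
  have hmaps : ∀ K ∈ (Finset.univ : Finset (GLF ℓ)),
      (K : Matrix (Fin ℓ) (Fin ℓ) (ZMod 2)).mulVec v ∈
        (Finset.univ : Finset (Fin ℓ → ZMod 2)).erase 0 := by
    intro K _
    refine Finset.mem_erase.2 ⟨fun h => hv ?_, Finset.mem_univ _⟩
    have := congrArg ((K⁻¹ : GLF ℓ) : Matrix (Fin ℓ) (Fin ℓ) (ZMod 2)).mulVec h
    rwa [Matrix.mulVec_mulVec, ← Units.val_mul, inv_mul_cancel, Units.val_one, Matrix.one_mulVec,
      Matrix.mulVec_zero] at this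
  have h := Finset.card_eq_sum_card_fiberwise hmaps
  rw [Finset.sum_congr rfl (fun y' h' => hfib y' (Finset.ne_of_mem_erase h')), Finset.sum_const,
    Finset.card_erase_of_mem (Finset.mem_univ _)] at h
  simp only [Finset.card_univ, Fintype.card_fun, ZMod.card, Fintype.card_fin, smul_eq_mul] at h
  rw [h, mul_comm]

/-- Union bound over pairs `(v, y) ∈ V × T`; the factor `2` absorbs `2 ^ ℓ / (2 ^ ℓ - 1)`. -/
lemma card_exists_mulVec_mem {ℓ : ℕ} (hℓ : 1 ≤ ℓ) (V T : Finset (Fin ℓ → ZMod 2))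
    (hV : ∀ v ∈ V, v ≠ 0) (hT : ∀ y ∈ T, y ≠ 0) :
    (Finset.univ.filter fun K : GLF ℓ =>
      ∃ v ∈ V, (K : Matrix (Fin ℓ) (Fin ℓ) (ZMod 2)).mulVec v ∈ T).card * 2 ^ ℓ
      ≤ 2 * (V.card * T.card) * Fintype.card (GLF ℓ) := by
  have hsub : (Finset.univ.filter fun K : GLF ℓ =>
      ∃ v ∈ V, (K : Matrix (Fin ℓ) (Fin ℓ) (ZMod 2)).mulVec v ∈ T) ⊆
      (V ×ˢ T).biUnion fun p => Finset.univ.filter fun K : GLF ℓ =>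
        (K : Matrix (Fin ℓ) (Fin ℓ) (ZMod 2)).mulVec p.1 = p.2 := by
    intro K hK
    obtain ⟨v, hv, h⟩ := (Finset.mem_filter.1 hK).2
    exact Finset.mem_biUnion.2 ⟨(v, _), Finset.mk_mem_product hv h, by simp⟩
  have h1 := (Finset.card_le_card hsub).trans Finset.card_biUnion_le
  have h2 : (2 : ℕ) ^ ℓ ≤ 2 * (2 ^ ℓ - 1) := by
    have : 2 ^ 1 ≤ 2 ^ ℓ := Nat.pow_le_pow_right (by norm_num) hℓ
    omega
  calc _ ≤ (∑ p ∈ V ×ˢ T, (Finset.univ.filter fun K : GLF ℓ =>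
        (K : Matrix (Fin ℓ) (Fin ℓ) (ZMod 2)).mulVec p.1 = p.2).card) * (2 * (2 ^ ℓ - 1)) :=
        Nat.mul_le_mul h1 h2
    _ = 2 * ∑ p ∈ V ×ˢ T, (Finset.univ.filter fun K : GLF ℓ =>
        (K : Matrix (Fin ℓ) (Fin ℓ) (ZMod 2)).mulVec p.1 = p.2).card * (2 ^ ℓ - 1) := by
        rw [← Finset.sum_mul]; ring
    _ = 2 * ∑ p ∈ V ×ˢ T, Fintype.card (GLF ℓ) := by
        congr 1
        refine Finset.sum_congr rfl fun p hp => ?_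
        rw [Finset.mem_product] at hp
        exact card_mulVec_eq_mul (hV _ hp.1) (hT _ hp.2)
    _ = _ := by rw [Finset.sum_const, Finset.card_product, smul_eq_mul]; ring

/-! ### Decodability as a linear incidence -/

/-- The vectors whose coordinates outside `U` agree with those of `c`. -/
def coordFlat {ℓ : ℕ} (U : Finset (Fin ℓ)) (c : Fin ℓ → ZMod 2) : Finset (Fin ℓ → ZMod 2) :=
  Finset.univ.filter fun y => ∀ j, j ∉ U → y j = c j

lemma mem_coordFlat {ℓ : ℕ} {U : Finset (Fin ℓ)} {c y : Fin ℓ → ZMod 2} :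
    y ∈ coordFlat U c ↔ ∀ j, j ∉ U → y j = c j := by simp [coordFlat]

lemma card_coordFlat {ℓ : ℕ} (U : Finset (Fin ℓ)) (c : Fin ℓ → ZMod 2) :
    (coordFlat U c).card = 2 ^ U.card := by
  have : coordFlat U c = Fintype.piFinset fun j => if j ∈ U then Finset.univ else {c j} := by
    ext y
    rw [mem_coordFlat, Fintype.mem_piFinset]
    refine forall_congr' fun j => ?_
    by_cases h : j ∈ U <;> simp [h]
  rw [this, Fintype.card_piFinset, Finset.prod_congr rfl
    (fun j _ => (apply_ite Finset.card (j ∈ U) Finset.univ {c j})), Finset.prod_ite]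
  simp

/-- A failure of decodability yields an input difference with leading position `i` whose output is
supported on the erased coordinates. -/
lemma exists_of_not_decodable {ℓ : ℕ} {K : Matrix (Fin ℓ) (Fin ℓ) (ZMod 2)} {i : Fin ℓ}
    {S : Finset (Fin ℓ)} (h : ¬ Decodable ℓ K i S) :
    ∃ v ∈ coordFlat (Finset.Ioi i) (Pi.single i 1), K.transpose.mulVec v ∈ coordFlat S 0 := by
  unfold Decodable at h
  push Not at h
  obtain ⟨u, u', h1, h2, h3⟩ := h
  refine ⟨u - u', mem_coordFlat.2 fun j hj => ?_, mem_coordFlat.2 fun j hj => ?_⟩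
  · rw [Finset.mem_Ioi, not_lt] at hj
    rcases hj.lt_or_eq with hj | rfl
    · simp [h1 j hj, hj.ne]
    · have : ∀ a b : ZMod 2, a ≠ b → a - b = 1 := by decide
      simpa using this _ _ h3
  · rw [Matrix.mulVec_transpose, Matrix.sub_vecMul]
    simp [h2 j hj]

/-- Linear duality: a decodable bit is a combination of the already known bits and of the
unerased output coordinates. -/
lemma exists_of_decodable {ℓ : ℕ} {K : Matrix (Fin ℓ) (Fin ℓ) (ZMod 2)} {i : Fin ℓ}
    {S : Finset (Fin ℓ)} (h : Decodable ℓ K i S) :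
    ∃ w ∈ coordFlat Sᶜ 0, K.mulVec w ∈ coordFlat (Finset.Iio i) (Pi.single i 1) := by
  let L : {j // j < i} ⊕ {j // j ∉ S} → (Fin ℓ → ZMod 2) →ₗ[ZMod 2] ZMod 2 :=
    Sum.elim (fun j => LinearMap.proj j.1) (fun j => LinearMap.proj j.1 ∘ₗ K.vecMulLinear)
  have hker : ⨅ k, LinearMap.ker (L k) ≤ LinearMap.ker (LinearMap.proj i) := by
    intro v hv
    simp only [Submodule.mem_iInf, LinearMap.mem_ker] at hv ⊢
    have := h v 0 (fun j hj => by simpa [L] using hv (Sum.inl ⟨j, hj⟩))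
      (fun j hj => by simpa [L] using hv (Sum.inr ⟨j, hj⟩))
    simpa using this
  obtain ⟨c, hc⟩ := (Submodule.mem_span_range_iff_exists_fun _).1
    (mem_span_of_iInf_ker_le_ker hker)
  let w : Fin ℓ → ZMod 2 := fun j => if hj : j ∉ S then c (Sum.inr ⟨j, hj⟩) else 0
  refine ⟨w, mem_coordFlat.2 fun j hj => ?_, mem_coordFlat.2 fun k hk => ?_⟩
  · have : j ∈ S := by simpa using hj
    simp [w, this]
  · have hk' : i ≤ k := by simpa using hk
    have h1 := LinearMap.congr_fun hc (Pi.single k 1)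
    have h2 : ∑ j : {j // j ∉ S}, c (Sum.inr j) * K k j.1 = K.mulVec w k := by
      rw [Matrix.mulVec, dotProduct, ← Fintype.sum_subtype_add_sum_subtype (fun j => j ∉ S)]
      have h0 : ∑ j : {j // ¬ j ∉ S}, K k j.1 * w j.1 = 0 :=
        Finset.sum_eq_zero fun j _ => by simp only [w, dif_neg j.2, mul_zero]
      rw [h0, add_zero]
      exact Finset.sum_congr rfl fun j _ => by simp only [w, dif_pos j.2, mul_comm]
    have h3 : ∀ j : {j // j < i}, (Pi.single k (1 : ZMod 2) : Fin ℓ → ZMod 2) j.1 = 0 :=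
      fun j => by simp [(j.2.trans_le hk').ne]
    simp [L, h3] at h1
    rw [← h2, h1]
    simp [Pi.single_apply, eq_comm]

lemma card_decodable_le {ℓ : ℕ} (i : Fin ℓ) (S : Finset (Fin ℓ)) :
    (Finset.univ.filter fun K : GLF ℓ =>
      Decodable ℓ (K : Matrix (Fin ℓ) (Fin ℓ) (ZMod 2)) i S).card * 2 ^ ℓ
      ≤ 2 ^ (1 + (ℓ - S.card) + i) * Fintype.card (GLF ℓ) := by
  have hℓ : 1 ≤ ℓ := i.pos
  have hne : ∀ y ∈ coordFlat (Finset.Iio i) (Pi.single i 1), y ≠ 0 := by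
    rintro y hy rfl
    simpa using mem_coordFlat.1 hy i (by simp)
  have h := card_exists_mulVec_mem hℓ ((coordFlat Sᶜ 0).filter (· ≠ 0))
    (coordFlat (Finset.Iio i) (Pi.single i 1)) (fun v hv => (Finset.mem_filter.1 hv).2) hne
  have hcard := Finset.card_filter_le (coordFlat Sᶜ 0) (· ≠ 0)
  rw [card_coordFlat, Finset.card_compl, Fintype.card_fin] at hcard
  rw [card_coordFlat, Fin.card_Iio] at h
  refine le_trans (Nat.mul_le_mul_right _ (Finset.card_le_card ?_)) (h.trans
    (Nat.mul_le_mul_right _ ?_))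
  · intro K hK
    obtain ⟨w, hw, hw'⟩ := exists_of_decodable (Finset.mem_filter.1 hK).2
    refine Finset.mem_filter.2 ⟨Finset.mem_univ _, w, Finset.mem_filter.2 ⟨hw, ?_⟩, hw'⟩
    rintro rfl
    exact hne _ hw' (Matrix.mulVec_zero _)
  · rw [pow_add, pow_add, pow_one, mul_assoc]
    gcongr

lemma card_not_decodable_le {ℓ : ℕ} (i : Fin ℓ) (S : Finset (Fin ℓ)) :
    (Finset.univ.filter fun K : GLF ℓ =>
      ¬ Decodable ℓ (K : Matrix (Fin ℓ) (Fin ℓ) (ZMod 2)) i S).card * 2 ^ ℓ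
      ≤ 2 ^ (1 + (ℓ - 1 - i) + S.card) * Fintype.card (GLF ℓ) := by
  have hℓ : 1 ≤ ℓ := i.pos
  have hne : ∀ y ∈ coordFlat (Finset.Ioi i) (Pi.single i 1), y ≠ 0 := by
    rintro y hy rfl
    simpa using mem_coordFlat.1 hy i (by simp)
  have h := card_exists_mulVec_mem hℓ (coordFlat (Finset.Ioi i) (Pi.single i 1))
    ((coordFlat S 0).filter (· ≠ 0)) hne (fun v hv => (Finset.mem_filter.1 hv).2)
  have hcard := Finset.card_filter_le (coordFlat S 0) (· ≠ 0)
  rw [card_coordFlat] at hcard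
  rw [card_coordFlat, Fin.card_Ioi] at h
  -- the vectors `v K` are the vectors `Kᵀ v`, and transposition permutes `GL(ℓ, F₂)`
  let tr : GLF ℓ → GLF ℓ := fun K => Matrix.GeneralLinearGroup.mkOfDetNeZero
    (K : Matrix (Fin ℓ) (Fin ℓ) (ZMod 2)).transpose
    (by rw [Matrix.det_transpose]; exact K.det_ne_zero)
  have htr : Function.Injective tr := by
    intro K K' hKK
    refine Units.ext (Matrix.transpose_injective ?_)
    exact congrArg Units.val hKK
  refine le_trans (Nat.mul_le_mul_right _ (Finset.card_le_card_of_injOn tr ?_ htr.injOn)) (h.trans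
    (Nat.mul_le_mul_right _ ?_))
  · intro K hK
    obtain ⟨v, hv, hv'⟩ := exists_of_not_decodable (Finset.mem_filter.1 hK).2
    refine Finset.mem_filter.2 ⟨Finset.mem_univ _, v, hv, Finset.mem_filter.2 ⟨hv', fun h0 => ?_⟩⟩
    apply hne _ hv
    have h1 : (tr K : Matrix (Fin ℓ) (Fin ℓ) (ZMod 2)).mulVec v = 0 := h0
    have := congrArg (((tr K)⁻¹ : GLF ℓ) : Matrix (Fin ℓ) (Fin ℓ) (ZMod 2)).mulVec h1
    rwa [Matrix.mulVec_mulVec, ← Units.val_mul, inv_mul_cancel, Units.val_one, Matrix.one_mulVec,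
      Matrix.mulVec_zero] at this
  · rw [pow_add, pow_add, pow_one, mul_assoc]
    gcongr

/-! ### Markov's inequality for the tilted mass -/

/-- Interpolation `min(1, 2 ^ t) ≤ exp (μ t)` for `0 ≤ μ ≤ log 2`, with `t = c - ℓ`. -/
lemma le_exp_mul_of_le {n N ℓ c : ℕ} {μ : ℝ} (h0 : 0 ≤ μ) (h1 : μ ≤ Real.log 2) (hn : n ≤ N)
    (h : n * 2 ^ ℓ ≤ 2 ^ c * N) : (n : ℝ) ≤ Real.exp (μ * (c - ℓ)) * N := by
  have hn' : (n : ℝ) ≤ N := by exact_mod_cast hn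
  have h' : (n : ℝ) * 2 ^ ℓ ≤ 2 ^ c * N := by exact_mod_cast h
  have hN : (0 : ℝ) ≤ N := N.cast_nonneg
  rcases le_total (ℓ : ℝ) c with hc | hc
  · have : 1 ≤ Real.exp (μ * (c - ℓ)) := Real.one_le_exp (mul_nonneg h0 (by linarith))
    nlinarith
  · have h2 : ∀ k : ℕ, (2 : ℝ) ^ k = Real.exp (Real.log 2 * k) := fun k => by
      rw [mul_comm, Real.exp_nat_mul, Real.exp_log two_pos]
    have h3 : (n : ℝ) ≤ Real.exp (Real.log 2 * (c - ℓ)) * N := by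
      rw [mul_sub, Real.exp_sub, ← h2, ← h2, div_mul_eq_mul_div, le_div_iff₀ (by positivity)]
      exact h'
    refine h3.trans (mul_le_mul_of_nonneg_right (Real.exp_le_exp.2 ?_) hN)
    nlinarith

/-- The total tilted mass of the atypical decoding outcomes of `K`: decodable erasure sets of bit
`i` are charged `exp (μ (|S| - (i + 1)))`, the others `exp (μ ((i + 1) - |S|))`, averaged over the
sets `S` of each size. -/
def tiltMass (ℓ : ℕ) (μ : ℝ) (K : Matrix (Fin ℓ) (Fin ℓ) (ZMod 2)) : ℝ :=
  ∑ i : Fin ℓ, ∑ S : Finset (Fin ℓ),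
    (if Decodable ℓ K i S then Real.exp (μ * (S.card - ((i : ℕ) + 1)))
      else Real.exp (μ * (((i : ℕ) + 1) - S.card))) / (ℓ.choose S.card)

lemma sum_weight_le {ℓ : ℕ} {μ : ℝ} (h0 : 0 ≤ μ) (h1 : μ ≤ Real.log 2) (i : Fin ℓ)
    (S : Finset (Fin ℓ)) :
    ∑ K : GLF ℓ, (if Decodable ℓ (K : Matrix (Fin ℓ) (Fin ℓ) (ZMod 2)) i S then
        Real.exp (μ * (S.card - ((i : ℕ) + 1)))
      else Real.exp (μ * (((i : ℕ) + 1) - S.card))) ≤ 3 * Fintype.card (GLF ℓ) := by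
  have hi : (i : ℕ) + 1 ≤ ℓ := i.2
  have hS : S.card ≤ ℓ := by simpa using Finset.card_le_univ S
  have a1 := le_exp_mul_of_le h0 h1 (Finset.card_filter_le _ _) (card_decodable_le i S)
  have a2 := le_exp_mul_of_le h0 h1 (Finset.card_filter_le _ _) (card_not_decodable_le i S)
  rw [Finset.sum_ite, Finset.sum_const, Finset.sum_const, nsmul_eq_mul, nsmul_eq_mul]
  have hN : (0 : ℝ) ≤ Fintype.card (GLF ℓ) := Nat.cast_nonneg _
  have b1 := mul_le_mul_of_nonneg_right a1 (Real.exp_nonneg (μ * (S.card - ((i : ℕ) + 1))))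
  have b2 := mul_le_mul_of_nonneg_right a2 (Real.exp_nonneg (μ * (((i : ℕ) + 1) - S.card)))
  rw [mul_right_comm, ← Real.exp_add] at b1 b2
  have e1 : μ * (((1 + (ℓ - S.card) + i : ℕ) : ℝ) - ℓ) + μ * (S.card - ((i : ℕ) + 1)) = 0 := by
    push_cast [Nat.cast_sub hS]; ring
  have e2 : μ * (((1 + (ℓ - 1 - i) + S.card : ℕ) : ℝ) - ℓ) + μ * (((i : ℕ) + 1) - S.card)
      = μ := by
    rw [Nat.sub_sub, Nat.add_comm 1 (i : ℕ)]
    push_cast [Nat.cast_sub hi]; ring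
  rw [e1, Real.exp_zero, one_mul] at b1
  rw [e2] at b2
  have h2 : Real.exp μ ≤ 2 := (Real.exp_le_exp.2 h1).trans (Real.exp_log two_pos).le
  have b3 := b2.trans (mul_le_mul_of_nonneg_right h2 hN)
  simp only [Finset.card_univ] at b1 b3
  linarith

lemma sum_inv_choose (ℓ : ℕ) : ∑ S : Finset (Fin ℓ), (1 : ℝ) / ℓ.choose S.card = ℓ + 1 := by
  have h := Finset.sum_powerset_apply_card (fun s => (1 : ℝ) / ℓ.choose s)
    (x := (Finset.univ : Finset (Fin ℓ)))
  rw [Finset.powerset_univ, Finset.card_univ, Fintype.card_fin] at h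
  rw [h, Finset.sum_congr rfl (g := fun _ => (1 : ℝ)), Finset.sum_const, Finset.card_range]
  · simp
  · intro s hs
    have : (0 : ℝ) < ℓ.choose s :=
      Nat.cast_pos.2 (Nat.choose_pos (Nat.lt_succ_iff.1 (Finset.mem_range.1 hs)))
    rw [nsmul_eq_mul, mul_one_div_cancel this.ne']

lemma sum_tiltMass_le {ℓ : ℕ} {μ : ℝ} (h0 : 0 ≤ μ) (h1 : μ ≤ Real.log 2) :
    ∑ K : GLF ℓ, tiltMass ℓ μ (K : Matrix (Fin ℓ) (Fin ℓ) (ZMod 2))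
      ≤ 3 * ℓ * (ℓ + 1) * Fintype.card (GLF ℓ) := by
  unfold tiltMass
  rw [Finset.sum_comm]
  calc _ ≤ ∑ i : Fin ℓ, ((3 * Fintype.card (GLF ℓ)) * ∑ S : Finset (Fin ℓ),
        (1 : ℝ) / ℓ.choose S.card) := by
        refine Finset.sum_le_sum fun i _ => ?_
        rw [Finset.sum_comm, Finset.mul_sum]
        refine Finset.sum_le_sum fun S _ => ?_
        rw [← Finset.sum_div, mul_one_div]
        exact div_le_div_of_nonneg_right (sum_weight_le h0 h1 i S) (Nat.cast_nonneg _)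
    _ = _ := by
        rw [sum_inv_choose, Finset.sum_const, Finset.card_univ, Fintype.card_fin, nsmul_eq_mul]
        ring

lemma tiltMass_nonneg (ℓ : ℕ) (μ : ℝ) (K : Matrix (Fin ℓ) (Fin ℓ) (ZMod 2)) :
    0 ≤ tiltMass ℓ μ K := by
  refine Finset.sum_nonneg fun i _ => Finset.sum_nonneg fun S _ =>
    div_nonneg ?_ (Nat.cast_nonneg _)
  split_ifs <;> positivity

/-- Markov's inequality for `tiltMass` over `GL(ℓ, F₂)`. -/
lemma fracGL_ge_of_tiltMass {ℓ : ℕ} (hℓ : 1 ≤ ℓ) {μ : ℝ} (h0 : 0 ≤ μ) (h1 : μ ≤ Real.log 2)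
    {P : GLF ℓ → Prop}
    (hP : ∀ K : GLF ℓ, tiltMass ℓ μ (K : Matrix (Fin ℓ) (Fin ℓ) (ZMod 2))
      ≤ 3 * ℓ ^ 2 * (ℓ + 1) → P K) :
    fracGL ℓ P ≥ 1 - 1 / (ℓ : ℝ) := by
  have hℓ' : (0 : ℝ) < ℓ := by exact_mod_cast hℓ
  have hN : (0 : ℝ) < Fintype.card (GLF ℓ) := Nat.cast_pos.2 Fintype.card_pos
  have hA : (0 : ℝ) < 3 * ℓ ^ 2 * (ℓ + 1) := by positivity
  have hbad : ((Finset.univ.filter fun K => ¬ P K).card : ℝ) * (3 * ℓ ^ 2 * (ℓ + 1)) ≤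
      3 * ℓ * (ℓ + 1) * Fintype.card (GLF ℓ) := by
    refine le_trans ?_ (sum_tiltMass_le h0 h1)
    rw [← nsmul_eq_mul, ← Finset.sum_const]
    refine (Finset.sum_le_sum fun K hK => ?_).trans (Finset.sum_le_sum_of_subset_of_nonneg
      (Finset.filter_subset _ _) fun K _ _ => tiltMass_nonneg ℓ μ _)
    exact (not_le.1 fun h => (Finset.mem_filter.1 hK).2 (hP K h)).le
  have hsplit : ((Finset.univ.filter P).card : ℝ) + (Finset.univ.filter fun K => ¬ P K).card
      = Fintype.card (GLF ℓ) := by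
    exact_mod_cast Finset.card_filter_add_card_filter_not (s := Finset.univ) P
  have hbad' : ((Finset.univ.filter fun K => ¬ P K).card : ℝ) * ℓ ≤ Fintype.card (GLF ℓ) := by
    refine le_of_mul_le_mul_left ?_ (show (0 : ℝ) < 3 * ℓ * (ℓ + 1) by positivity)
    linarith
  unfold fracGL
  rw [ge_iff_le, le_div_iff₀ hN, sub_mul, div_mul_eq_mul_div, one_mul, sub_le_iff_le_add]
  have := (le_div_iff₀ hℓ').2 hbad'
  linarith

/-! ### Bounds on the polarization behavior, uniform in `z` -/

/-- Chernoff-type change of weights. One term of the binomial expansion of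
`(z * exp σ + (1 - z)) ^ ℓ ≤ exp (ℓ * (σ * z + σ ^ 2))` bounds the probability of each erasure
pattern. -/
lemma pattern_prob_le {ℓ s : ℕ} (hs : s ≤ ℓ) {z σ : ℝ} (m : ℝ) (hz0 : 0 ≤ z) (hz1 : z ≤ 1)
    (hσ : |σ| ≤ 1) :
    z ^ s * (1 - z) ^ (ℓ - s) ≤
      Real.exp (σ * (m - s)) / ℓ.choose s * Real.exp (σ * (ℓ * z - m) + ℓ * σ ^ 2) := by
  have hC : (0 : ℝ) < ℓ.choose s := Nat.cast_pos.2 (Nat.choose_pos hs)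
  have hz1' : 0 ≤ 1 - z := by linarith
  have h1 : (z * Real.exp σ) ^ s * (1 - z) ^ (ℓ - s) * ℓ.choose s
      ≤ (z * Real.exp σ + (1 - z)) ^ ℓ := by
    rw [add_pow]
    exact Finset.single_le_sum (f := fun k => (z * Real.exp σ) ^ k * (1 - z) ^ (ℓ - k) *
      (ℓ.choose k : ℝ)) (fun k _ => by positivity) (Finset.mem_range.2 (Nat.lt_succ_of_le hs))
  have h2 : z * Real.exp σ + (1 - z) ≤ Real.exp (σ * z + σ ^ 2) := by
    have h3 := (abs_le.1 (Real.abs_exp_sub_one_sub_id_le hσ)).2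
    have h4 := Real.add_one_le_exp (σ * z + σ ^ 2)
    nlinarith [sq_nonneg σ]
  have h5 : (z * Real.exp σ + (1 - z)) ^ ℓ ≤ Real.exp (ℓ * (σ * z + σ ^ 2)) := by
    rw [Real.exp_nat_mul]
    exact pow_le_pow_left₀ (by positivity) h2 ℓ
  have h6 := h1.trans h5
  rw [mul_pow, ← Real.exp_nat_mul] at h6
  rw [div_mul_eq_mul_div, le_div_iff₀ hC, ← Real.exp_add]
  have h7 : σ * (m - s) + (σ * (ℓ * z - m) + ℓ * σ ^ 2)
      = ℓ * (σ * z + σ ^ 2) - s * σ := by ring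
  rw [h7, Real.exp_sub, le_div_iff₀ (Real.exp_pos _)]
  linarith

lemma sum_pattern_le {ℓ : ℕ} {z σ : ℝ} (m : ℝ) (hz0 : 0 ≤ z) (hz1 : z ≤ 1) (hσ : |σ| ≤ 1)
    (p : Finset (Fin ℓ) → Prop) [DecidablePred p] :
    ∑ S : Finset (Fin ℓ), (if p S then z ^ S.card * (1 - z) ^ (ℓ - S.card) else 0) ≤
      (∑ S : Finset (Fin ℓ), if p S then Real.exp (σ * (m - S.card)) / ℓ.choose S.card else 0) *
        Real.exp (σ * (ℓ * z - m) + ℓ * σ ^ 2) := by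
  rw [Finset.sum_mul]
  refine Finset.sum_le_sum fun S _ => ?_
  split_ifs with h
  · exact pattern_prob_le (by simpa using Finset.card_le_univ S) m hz0 hz1 hσ
  · simp

lemma sum_ite_le_tiltMass {ℓ : ℕ} {μ : ℝ} {K : Matrix (Fin ℓ) (Fin ℓ) (ZMod 2)} (i : Fin ℓ)
    (w : Finset (Fin ℓ) → ℝ)
    (hw : ∀ S, w S ≤ (if Decodable ℓ K i S then Real.exp (μ * (S.card - ((i : ℕ) + 1)))
      else Real.exp (μ * (((i : ℕ) + 1) - S.card))) / (ℓ.choose S.card)) :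
    ∑ S, w S ≤ tiltMass ℓ μ K := by
  refine (Finset.sum_le_sum fun S _ => hw S).trans ?_
  refine Finset.single_le_sum (f := fun i : Fin ℓ => ∑ S : Finset (Fin ℓ),
    (if Decodable ℓ K i S then Real.exp (μ * (S.card - ((i : ℕ) + 1)))
      else Real.exp (μ * (((i : ℕ) + 1) - S.card))) / (ℓ.choose S.card : ℝ))
    (fun i _ => Finset.sum_nonneg fun S _ => div_nonneg ?_ (Nat.cast_nonneg _)) (Finset.mem_univ i)
  split_ifs <;> positivity

lemma fK_le {ℓ : ℕ} {μ z : ℝ} (K : Matrix (Fin ℓ) (Fin ℓ) (ZMod 2)) (i : Fin ℓ)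
    (h0 : 0 ≤ μ) (h1 : μ ≤ 1) (hz0 : 0 ≤ z) (hz1 : z ≤ 1) :
    fK ℓ K i z ≤ tiltMass ℓ μ K *
      Real.exp (μ * (ℓ * z - ((i : ℕ) + 1)) + ℓ * μ ^ 2) := by
  refine (sum_pattern_le (σ := μ) ((i : ℕ) + 1) hz0 hz1 (by rwa [abs_of_nonneg h0])
    (fun S => ¬ Decodable ℓ K i S)).trans
    (mul_le_mul_of_nonneg_right (sum_ite_le_tiltMass i _ fun S => ?_) (Real.exp_nonneg _))
  by_cases h : Decodable ℓ K i S
  · simp only [h, not_true_eq_false, if_true, if_false]; positivity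
  · simp only [h, not_false_eq_true, if_true, if_false]; exact le_rfl

/-- The decodable erasure sets have total probability `1 - f_{K,i}(z)`; the tilt is `-μ`. -/
lemma one_sub_fK_le {ℓ : ℕ} {μ z : ℝ} (K : Matrix (Fin ℓ) (Fin ℓ) (ZMod 2)) (i : Fin ℓ)
    (h0 : 0 ≤ μ) (h1 : μ ≤ 1) (hz0 : 0 ≤ z) (hz1 : z ≤ 1) :
    1 - fK ℓ K i z ≤ tiltMass ℓ μ K *
      Real.exp (-μ * (ℓ * z - ((i : ℕ) + 1)) + ℓ * μ ^ 2) := by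
  have htot := Fin.sum_pow_mul_eq_add_pow (n := ℓ) z (1 - z)
  rw [add_sub_cancel, one_pow] at htot
  have heq : 1 - fK ℓ K i z = ∑ S : Finset (Fin ℓ),
      if Decodable ℓ K i S then z ^ S.card * (1 - z) ^ (ℓ - S.card) else 0 := by
    refine (congrArg (· - fK ℓ K i z) htot.symm).trans ?_
    simp only [fK]
    rw [← Finset.sum_sub_distrib]
    refine Finset.sum_congr rfl fun S _ => ?_
    by_cases h : Decodable ℓ K i S <;> simp [h]
  rw [heq]
  have := sum_pattern_le (σ := -μ) ((i : ℕ) + 1) hz0 hz1 (by rwa [abs_neg, abs_of_nonneg h0])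
    (fun S => Decodable ℓ K i S)
  rw [neg_sq] at this
  refine this.trans
    (mul_le_mul_of_nonneg_right (sum_ite_le_tiltMass i _ fun S => ?_) (Real.exp_nonneg _))
  by_cases h : Decodable ℓ K i S
  · simp only [h, if_true]
    rw [neg_mul, ← mul_neg, neg_sub]
  · simp only [h, if_false]; positivity

/-- The slack in the exponent: `-25 L² / 4` beats the Markov loss `3 ℓ² (ℓ + 1) ≤ ℓ ^ 4`. -/
lemma mass_mul_exp_lt {ℓ : ℕ} (hℓ : 32 ≤ ℓ) {e : ℝ}
    (he : e ≤ -(25 / 4) * Real.logb 2 ℓ ^ 2) :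
    3 * (ℓ : ℝ) ^ 2 * (ℓ + 1) * Real.exp e < (ℓ : ℝ) ^ (-(2 + Real.logb 2 ℓ)) := by
  have hℓ' : (32 : ℝ) ≤ ℓ := by exact_mod_cast hℓ
  have hpos : (0 : ℝ) < ℓ := by linarith
  set L := Real.logb 2 ℓ with hL
  have hlog : Real.log ℓ = L * Real.log 2 := by
    rw [hL, Real.logb, div_mul_cancel₀ _ (Real.log_pos one_lt_two).ne']
  have hL5 : 5 ≤ L := by
    rw [hL, Real.le_logb_iff_rpow_le one_lt_two hpos]
    exact le_trans (by norm_num) hℓ'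
  have hA : 3 * (ℓ : ℝ) ^ 2 * (ℓ + 1) ≤ ℓ ^ 4 := by
    have : 3 * ((ℓ : ℝ) + 1) ≤ ℓ ^ 2 := by nlinarith
    nlinarith [mul_le_mul_of_nonneg_left this (sq_nonneg (ℓ : ℝ))]
  have hA' : (ℓ : ℝ) ^ 4 = Real.exp (4 * (L * Real.log 2)) := by
    rw [← hlog, show (4 : ℝ) = ((4 : ℕ) : ℝ) by norm_num, Real.exp_nat_mul, Real.exp_log hpos]
  rw [Real.rpow_def_of_pos hpos, hlog]
  refine (mul_le_mul_of_nonneg_right hA (Real.exp_nonneg _)).trans_lt ?_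
  rw [hA', ← Real.exp_add, Real.exp_lt_exp]
  have h2 : Real.log 2 < 0.7 := Real.log_two_lt_d9.trans (by norm_num)
  have h3 : L * (6 + L) * Real.log 2 ≤ L * (6 + L) * 0.7 :=
    mul_le_mul_of_nonneg_left h2.le (by positivity)
  nlinarith

theorem stmt16 (ℓ : ℕ) (hℓ : 32 ≤ ℓ) :
    fracGL ℓ (fun K =>
        ∀ i : Fin ℓ,
          (∀ z ∈ Set.Icc (0 : ℝ) 1,
            z ≥ ((i : ℕ) + 1 : ℝ) / ℓ + 5 * (ℓ : ℝ) ^ (-(1 : ℝ) / 2) * Real.logb 2 ℓ →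
            fK ℓ (K : Matrix (Fin ℓ) (Fin ℓ) (ZMod 2)) i z >
              1 - (ℓ : ℝ) ^ (-(2 + Real.logb 2 ℓ))) ∧
          (∀ z ∈ Set.Icc (0 : ℝ) 1,
            z ≤ ((i : ℕ) + 1 : ℝ) / ℓ - 5 * (ℓ : ℝ) ^ (-(1 : ℝ) / 2) * Real.logb 2 ℓ →
            fK ℓ (K : Matrix (Fin ℓ) (Fin ℓ) (ZMod 2)) i z <
              (ℓ : ℝ) ^ (-(2 + Real.logb 2 ℓ)))) ≥
      1 - 1 / (ℓ : ℝ) := by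
  have hℓ' : (32 : ℝ) ≤ ℓ := by exact_mod_cast hℓ
  have hpos : (0 : ℝ) < ℓ := by linarith
  set L := Real.logb 2 ℓ with hL
  set r := (ℓ : ℝ) ^ (-(1 : ℝ) / 2) with hr
  have hL0 : 0 ≤ L := Real.logb_nonneg one_lt_two (by linarith)
  have hr0 : 0 ≤ r := Real.rpow_nonneg hpos.le _
  have hrsq : r * r * ℓ = 1 := by
    rw [hr, ← Real.rpow_add hpos, show -(1 : ℝ) / 2 + -1 / 2 = -1 by norm_num, Real.rpow_neg_one,
      inv_mul_cancel₀ hpos.ne']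
  -- `5 r L / 2` optimises the exponent `-μ * 5 r L ℓ + ℓ μ²`; if it exceeds `1 / 2`, there is no
  -- `z ∈ [0, 1]` to consider.
  have hmin0 : 0 ≤ min (1 / 2) (5 * r * L / 2) := le_min (by norm_num) (by positivity)
  have hlog2 : (1 / 2 : ℝ) ≤ Real.log 2 := le_trans (by norm_num) Real.log_two_gt_d9.le
  refine fracGL_ge_of_tiltMass (by omega) hmin0 ((min_le_left _ _).trans hlog2) ?_
  intro K hK i
  have hi : ((i : ℕ) + 1 : ℝ) / ℓ ≤ 1 := by
    rw [div_le_one hpos]; exact_mod_cast i.2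
  have hi0 : 0 ≤ ((i : ℕ) + 1 : ℝ) / ℓ := by positivity
  have hmul : ((i : ℕ) + 1 : ℝ) / ℓ * ℓ = (i : ℕ) + 1 := div_mul_cancel₀ _ hpos.ne'
  constructor
  · intro z hz hzi
    have hμ : min (1 / 2) (5 * r * L / 2) = 5 * r * L / 2 := min_eq_right (by linarith [hz.2])
    rw [hμ] at hK hmin0
    have h1 := one_sub_fK_le (K : Matrix (Fin ℓ) (Fin ℓ) (ZMod 2)) i hmin0
      (by linarith [hz.2]) hz.1 hz.2
    have h2 := h1.trans (mul_le_mul_of_nonneg_right hK (Real.exp_nonneg _))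
    have h3 := mul_le_mul_of_nonneg_right hzi hpos.le
    rw [add_mul, hmul] at h3
    have h4 := mul_le_mul_of_nonneg_left h3 hmin0
    have h5 := mass_mul_exp_lt hℓ (e := -(5 * r * L / 2) * (ℓ * z - ((i : ℕ) + 1))
      + ℓ * (5 * r * L / 2) ^ 2) (by rw [← hL]; linear_combination h4 - 25 / 4 * L ^ 2 * hrsq)
    linarith
  · intro z hz hzi
    have hμ : min (1 / 2) (5 * r * L / 2) = 5 * r * L / 2 := min_eq_right (by linarith [hz.1])
    rw [hμ] at hK hmin0
    have h1 := fK_le (K : Matrix (Fin ℓ) (Fin ℓ) (ZMod 2)) i hmin0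
      (by linarith [hz.1]) hz.1 hz.2
    have h2 := h1.trans (mul_le_mul_of_nonneg_right hK (Real.exp_nonneg _))
    have h3 := mul_le_mul_of_nonneg_right hzi hpos.le
    rw [sub_mul, hmul] at h3
    have h4 := mul_le_mul_of_nonneg_left h3 hmin0
    have h5 := mass_mul_exp_lt hℓ (e := (5 * r * L / 2) * (ℓ * z - ((i : ℕ) + 1))
      + ℓ * (5 * r * L / 2) ^ 2) (by rw [← hL]; linear_combination h4 - 25 / 4 * L ^ 2 * hrsq)
    exact h2.trans_lt h5

end
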